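/- Let d ≥ 1, D ≥ 3 and e be integers with 1 ≤ e ≤ D and e ∣ D, assume (D−2)(d−1) + D/e ≥ 2, and let A ⊆ ℕ^d be of one-singular-point type for D and e. Set t₀ := (D−2)(d−1) + D/e − 2. If y ∈ ℕ^d satisfies e ∣ |y| and |y| > t₀·D, then y ∈ sA for every natural number s with s·D ≥ |y|. -/

import Mathlib

open Pointwise

/-- The `s`-fold sumset of `A`: `0A = {0}` and `(s+1)A = A + sA`. -/
def sumset {M : Type*} [AddMonoid M] (A : Set M) : ℕ → Set M
  | 0 => {0}
  | s + 1 => A + sumset A s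

/-- `ℕ_e^d = {y ∈ ℕ^d : e ∣ |y|}`. -/
def NatE (d e : ℕ) : Set (Fin d → ℕ) := {y | e ∣ ∑ j, y j}

/-- `Δ_{s,e} = {y ∈ ℕ_e^d : |y| ≤ sD}`. -/
def DeltaE (d D e s : ℕ) : Set (Fin d → ℕ) := {y | e ∣ ∑ j, y j ∧ ∑ j, y j ≤ s * D}

/-- The hole set `H = ℕ_e^d \ ⟨A⟩`, where `⟨A⟩` is the additive submonoid generated by `A`. -/
def Holes (d e : ℕ) (A : Set (Fin d → ℕ)) : Set (Fin d → ℕ) :=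
  NatE d e \ (AddSubmonoid.closure A : Set (Fin d → ℕ))

/-- The set `{0, Dε₁, …, Dε_d}`. -/
def Erays (d D : ℕ) : Set (Fin d → ℕ) :=
  insert 0 (Set.range fun i : Fin d => Pi.single i D)

/-- `A ⊆ ℕ^d` is of one-singular-point type for `D` and `e`: every `a ∈ A` satisfies
`|a| ≤ D` and `e ∣ |a|`, and `A` contains `0`, the vectors `(D-1)εᵢ + εⱼ` for all `i, j`,
and the vectors `(D-e)εᵢ` for all `i`. -/
def OneSingType (d D e : ℕ) (A : Set (Fin d → ℕ)) : Prop :=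
  (∀ a ∈ A, ∑ j, a j ≤ D ∧ e ∣ ∑ j, a j) ∧
  (0 : Fin d → ℕ) ∈ A ∧
  (∀ i j : Fin d, Pi.single i (D - 1) + Pi.single j 1 ∈ A) ∧
  (∀ i : Fin d, Pi.single i (D - e) ∈ A)

/-!
Write `y = (D - 1)q + r` with `q ≤ ⌊y / (D - 1)⌋` coordinatewise. If `|y| = sD` and
`s ≥ (D - 2)(d - 1)`, the floors add up to at least `s`, so `q` can be chosen with `|q| = s`, which
forces `|r| = s`; pairing the units of `q` with those of `r` writes `y` as a sum of `s` vectors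
`(D - 1)εᵢ + εⱼ`. If instead `|y| = sD - ce` and `s ≥ (D - 2)(d - 1) + c` with `c > 0`, some
coordinate of `y` is at least `D - e`, and removing `(D - e)εᵢ` lowers both `s` and `c` by one.
For `s = ⌈|y| / D⌉` one has `c < D / e`, and `|y| > t₀D` gives `s ≥ (D - 2)(d - 1) + D / e - 1`.
-/

/-- On the right `s • A` is the iterated pointwise sum, not the dilation of `A` by `s`; the same
holds for every multiple of a set below. -/
lemma sumset_eq_nsmul {M : Type*} [AddMonoid M] (A : Set M) (s : ℕ) : sumset A s = s • A := by
  induction s with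
  | zero => rw [sumset, zero_nsmul, Set.singleton_zero]
  | succ s ih => rw [sumset, ih, succ_nsmul']

lemma ceilDiv_mul_lt_add (a : ℕ) {b : ℕ} (hb : 0 < b) : (a ⌈/⌉ b) * b < a + b := by
  have := Nat.div_mul_le_self (a + b - 1) b
  rw [Nat.ceilDiv_eq_add_pred_div]
  omega

section CommMonoid

variable {ι κ M : Type*} [Fintype ι] [Fintype κ] [AddCommMonoid M]

lemma sum_nsmul_mem_nsmul_range (v : ι → M) (q : ι → ℕ) :
    ∑ i, q i • v i ∈ (∑ i, q i) • Set.range v := by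
  rw [← Finset.sum_nsmul_assoc]
  exact Set.finsetSum_mem_finsetSum _ _ _ fun i _ ↦ Set.nsmul_mem_nsmul (Set.mem_range_self i)

lemma sum_nsmul_add_sum_nsmul_mem_nsmul {A : Set M} {v : ι → M} {w : κ → M}
    (hA : ∀ i j, v i + w j ∈ A) {q : ι → ℕ} {r : κ → ℕ} {s : ℕ}
    (hq : ∑ i, q i = s) (hr : ∑ j, r j = s) :
    ∑ i, q i • v i + ∑ j, r j • w j ∈ s • A := by
  have hvw : Set.range v + Set.range w ⊆ A := by
    rintro _ ⟨_, ⟨i, rfl⟩, _, ⟨j, rfl⟩, rfl⟩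
    exact hA i j
  refine Set.nsmul_subset_nsmul_left hvw ?_
  rw [nsmul_add]
  exact Set.add_mem_add (hq ▸ sum_nsmul_mem_nsmul_range v q) (hr ▸ sum_nsmul_mem_nsmul_range w r)

end CommMonoid

section NatVectors

variable {ι : Type*} [Fintype ι]

lemma exists_le_sum_eq {f : ι → ℕ} {n : ℕ} (hn : n ≤ ∑ i, f i) : ∃ q ≤ f, ∑ i, q i = n := by
  obtain ⟨q, hqf, hq⟩ := Finsupp.exists_le_degree_eq (Finsupp.equivFunOnFinite.symm f) n
    (by simpa [Finsupp.degree_eq_sum] using hn)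
  exact ⟨q, hqf, by rw [← hq, Finsupp.degree_eq_sum]⟩

lemma exists_le_of_card_mul_lt_sum_add_card {y : ι → ℕ} {k : ℕ}
    (h : Fintype.card ι * k < ∑ i, y i + Fintype.card ι) : ∃ i, k ≤ y i := by
  obtain ⟨i, -, hi⟩ := Finset.exists_lt_of_sum_lt (s := Finset.univ)
    (f := fun _ : ι ↦ k) (g := fun i ↦ y i + 1) (by simpa [Finset.sum_add_distrib] using h)
  exact ⟨i, Nat.lt_succ_iff.mp hi⟩

lemma sum_le_mul_sum_div_add (y : ι → ℕ) {m : ℕ} (hm : 0 < m) :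
    ∑ i, y i ≤ m * ∑ i, (y i / m) + Fintype.card ι * (m - 1) := by
  calc ∑ i, y i ≤ ∑ i, (m * (y i / m) + (m - 1)) := by
        gcongr with i
        have := Nat.div_add_mod (y i) m
        have := Nat.mod_lt (y i) hm
        omega
    _ = m * ∑ i, (y i / m) + Fintype.card ι * (m - 1) := by
        simp [Finset.sum_add_distrib, Finset.mul_sum]

lemma le_sum_div {y : ι → ℕ} {m s : ℕ} (hm : 0 < m) (hs : (m - 1) * (Fintype.card ι - 1) ≤ s)
    (hy : s * (m + 1) ≤ ∑ i, y i) : s ≤ ∑ i, (y i / m) := by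
  have hfloor := sum_le_mul_sum_div_add y hm
  have hcard : Fintype.card ι * (m - 1) ≤ (m - 1) * (Fintype.card ι - 1) + (m - 1) := by
    rw [← Nat.mul_add_one, mul_comm]
    gcongr
    omega
  by_contra! hlt
  have hmul : m * (∑ i, (y i / m) + 1) ≤ m * s := by gcongr; exact hlt
  rw [mul_add_one] at hmul hy
  rw [mul_comm s m] at hy
  omega

lemma exists_sub_le_of_sum_add_mul_eq [Nonempty ι] {D e c s : ℕ} (hD : 2 ≤ D)
    (he : 0 < e) (heD : e ≤ D) (hc : 0 < c) (hs : (D - 2) * (Fintype.card ι - 1) + c ≤ s)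
    {y : ι → ℕ} (hy : ∑ i, y i + c * e = s * D) : ∃ i, D - e ≤ y i := by
  obtain ⟨b, hb⟩ := Nat.exists_eq_add_one.mpr (Fintype.card_pos (α := ι))
  rw [hb, Nat.add_sub_cancel] at hs
  have hother : b * (D - e) ≤ (D - 2) * b * D + b := by
    calc b * (D - e) ≤ b * (D - 2 + 1) := by gcongr; omega
      _ = (D - 2) * b * 1 + b := by ring
      _ ≤ (D - 2) * b * D + b := by gcongr; omega
  have hlower : (D - 2) * b * D + c * (D - e) ≤ ∑ i, y i := by
    have hsD : ((D - 2) * b + c) * D ≤ s * D := by gcongr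
    have hce : c * e ≤ c * D := by gcongr
    rw [add_mul] at hsD
    rw [Nat.mul_sub]
    omega
  apply exists_le_of_card_mul_lt_sum_add_card
  calc Fintype.card ι * (D - e) = b * (D - e) + (D - e) := by rw [hb, add_one_mul]
    _ ≤ (D - 2) * b * D + b + c * (D - e) := add_le_add hother (Nat.le_mul_of_pos_left _ hc)
    _ < ∑ i, y i + Fintype.card ι := by omega

variable [DecidableEq ι] {D e : ℕ} {A : Set (ι → ℕ)}

lemma sum_nsmul_single (q : ι → ℕ) (k : ℕ) : ∑ i, q i • Pi.single i k = k • q := by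
  simp only [← Pi.single_smul, Finset.univ_sum_single (fun i ↦ q i • k)]
  ext i
  simp [mul_comm]

lemma mem_nsmul_of_sum_eq (hD : 2 ≤ D) (hpair : ∀ i j, Pi.single i (D - 1) + Pi.single j 1 ∈ A)
    {s : ℕ} (hs : (D - 2) * (Fintype.card ι - 1) ≤ s) {y : ι → ℕ} (hy : ∑ i, y i = s * D) :
    y ∈ s • A := by
  obtain ⟨m, rfl⟩ : ∃ m, D = m + 1 := ⟨D - 1, by omega⟩
  rw [Nat.add_sub_cancel] at hpair
  obtain ⟨q, hqy, hq⟩ := exists_le_sum_eq (le_sum_div (by omega) (by simpa using hs) hy.ge)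
  obtain ⟨r, rfl⟩ : ∃ r, y = m • q + r := exists_add_of_le fun i ↦
    (Nat.mul_le_mul_left m (hqy i)).trans (Nat.mul_div_le (y i) m)
  have hr : ∑ i, r i = s := by
    simp only [Pi.add_apply, Pi.smul_apply, smul_eq_mul, Finset.sum_add_distrib,
      ← Finset.mul_sum, hq] at hy
    linarith
  simpa only [sum_nsmul_single, one_nsmul] using sum_nsmul_add_sum_nsmul_mem_nsmul hpair hq hr

lemma mem_nsmul_of_sum_add_mul_eq [Nonempty ι] (hD : 2 ≤ D) (he : 0 < e) (heD : e ≤ D)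
    (hpair : ∀ i j, Pi.single i (D - 1) + Pi.single j 1 ∈ A)
    (hsingle : ∀ i, Pi.single i (D - e) ∈ A) {c s : ℕ}
    (hs : (D - 2) * (Fintype.card ι - 1) + c ≤ s) {y : ι → ℕ}
    (hy : ∑ i, y i + c * e = s * D) : y ∈ s • A := by
  induction c generalizing s y with
  | zero => exact mem_nsmul_of_sum_eq hD hpair hs (by simpa using hy)
  | succ c ih =>
    obtain ⟨i, hi⟩ := exists_sub_le_of_sum_add_mul_eq hD he heD c.succ_pos hs hy
    obtain ⟨z, rfl⟩ : ∃ z : ι → ℕ, y = Pi.single i (D - e) + z :=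
      exists_add_of_le (update_le_iff.mpr ⟨hi, fun j _ ↦ Nat.zero_le (y j)⟩)
    obtain ⟨t, rfl⟩ : ∃ t, s = t + 1 := ⟨s - 1, by omega⟩
    have hz : ∑ j, z j + c * e = t * D := by
      simp only [Pi.add_apply, Finset.sum_add_distrib, Finset.sum_pi_single', Finset.mem_univ,
        if_true, add_one_mul] at hy
      omega
    rw [succ_nsmul']
    exact Set.add_mem_add (hsingle i) (ih (by omega) hz)

/-- The hypothesis `hy` is `t₀ * D < |y|` with `2 * D` moved to the right, since the natural-number
subtraction in `t₀` would be truncated when `|ι| = 1` and `e = D`. -/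
theorem stmt_10_general [Nonempty ι] (hD : 2 ≤ D) (heD : e ∣ D) (h0 : 0 ∈ A)
    (hpair : ∀ i j, Pi.single i (D - 1) + Pi.single j 1 ∈ A)
    (hsingle : ∀ i, Pi.single i (D - e) ∈ A) {y : ι → ℕ} (hye : e ∣ ∑ i, y i)
    (hy : ((D - 2) * (Fintype.card ι - 1) + D / e) * D < ∑ i, y i + 2 * D)
    {s : ℕ} (hs : ∑ i, y i ≤ s * D) : y ∈ sumset A s := by
  have hDpos : 0 < D := by omega
  have hepos : 0 < e := Nat.pos_of_dvd_of_pos heD hDpos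
  set n := (∑ i, y i) ⌈/⌉ D
  have hle : ∑ i, y i ≤ n * D := by
    rw [mul_comm]
    exact le_smul_ceilDiv hDpos
  have hlt : n * D < ∑ i, y i + D := ceilDiv_mul_lt_add _ hDpos
  have hns : n ≤ s := (ceilDiv_le_iff_le_mul hDpos).mpr (mul_comm s D ▸ hs)
  have hbound : (D - 2) * (Fintype.card ι - 1) + D / e < n + 2 :=
    lt_of_mul_lt_mul_right (by rw [add_mul n]; omega) D.zero_le
  obtain ⟨c, hc⟩ : e ∣ n * D - ∑ i, y i := Nat.dvd_sub (heD.mul_left n) hye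
  have hcD : c < D / e := (Nat.lt_div_iff_mul_lt' heD c).mpr (by omega)
  rw [sumset_eq_nsmul]
  refine Set.nsmul_subset_nsmul_right h0 hns ?_
  exact mem_nsmul_of_sum_add_mul_eq hD hepos (Nat.le_of_dvd hDpos heD) hpair hsingle
    (c := c) (by omega) (by rw [mul_comm c]; omega)

end NatVectors

theorem stmt_10 (d D e : ℕ) (hd : 1 ≤ d) (hD : 3 ≤ D) (he : 1 ≤ e) (heD : e ≤ D)
    (hdvd : e ∣ D) (ht : 2 ≤ (D - 2) * (d - 1) + D / e)
    (A : Set (Fin d → ℕ)) (hA : OneSingType d D e A)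
    (y : Fin d → ℕ) (hye : e ∣ ∑ j, y j)
    (hy : ((D - 2) * (d - 1) + D / e - 2) * D < ∑ j, y j) :
    ∀ s : ℕ, ∑ j, y j ≤ s * D → y ∈ sumset A s := by
  obtain ⟨-, h0, hpair, hsingle⟩ := hA
  have : Nonempty (Fin d) := Fin.pos_iff_nonempty.mp hd
  rw [Nat.sub_mul] at hy
  exact fun s ↦ stmt_10_general (by omega) hdvd h0 hpair hsingle hye
    (by rw [Fintype.card_fin]; omega)
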